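/- Let T > 0 and d₀, d₁, d₂ ∈ ℝ³, define ω(t) = d₀ + t·d₁ + t²·d₂, θ(t) = ∫₀ᵗ ω(s) ds, and Δθ_k = ∫_{(k−1)T}^{kT} ω(s) ds for k = 1, 2, 3. If σ : ℝ → ℝ³ is differentiable with σ(0) = 0 and σ̇(t) = ω(t) + ½ θ(t) × ω(t) for all t, then σ(3T) = Δθ₁ + Δθ₂ + Δθ₃ + (33/80)·(Δθ₁ × Δθ₃) + (57/80)·(Δθ₂ × (Δθ₃ − Δθ₁)) (the mainstream non-coning-optimized 3-sample attitude algorithm is exact for quadratic angular velocity). -/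

import Mathlib

open Matrix

/-!
The integrand of `σ (3T)` is a polynomial in `t` with vector coefficients. Since the cross product
is alternating, only the three products `d₀ × d₁`, `d₀ × d₂`, `d₁ × d₂` survive, both in
`∫ θ × ω` and in `Δθᵢ × Δθⱼ`, the increments being combinations of `T d₀`, `T² d₁`, `T³ d₂` with
rational coefficients. Matching these three products is a consistent linear system for the two
weights, with solution `33/80` and `57/80`.
-/

section Algebra

theorem isAlt_apply_smul_add_smul_add_smul {R M N : Type*} [CommRing R] [AddCommGroup M]
    [Module R M] [AddCommGroup N] [Module R N] {B : M →ₗ[R] M →ₗ[R] N} (hB : B.IsAlt)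
    (a₀ a₁ a₂ b₀ b₁ b₂ : R) (u v w : M) :
    B (a₀ • u + a₁ • v + a₂ • w) (b₀ • u + b₁ • v + b₂ • w) =
      (a₀ * b₁ - a₁ * b₀) • B u v + (a₀ * b₂ - a₂ * b₀) • B u w +
        (a₁ * b₂ - a₂ * b₁) • B v w := by
  simp only [map_add, map_smul, LinearMap.add_apply, LinearMap.smul_apply, hB.self_eq_zero,
    ← hB.neg u v, ← hB.neg u w, ← hB.neg v w]
  module

variable {K M N : Type*} [Field K] [CharZero K] [AddCommGroup M] [Module K M] [AddCommGroup N]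
  [Module K N] {B : M →ₗ[K] M →ₗ[K] N}

theorem isAlt_apply_primitive_quadratic_quadratic (hB : B.IsAlt) (d₀ d₁ d₂ : M) (t : K) :
    B (t • d₀ + (t ^ 2 / 2) • d₁ + (t ^ 3 / 3) • d₂) (d₀ + t • d₁ + t ^ 2 • d₂) =
      (t ^ 2 / 2) • B d₀ d₁ + (2 * t ^ 3 / 3) • B d₀ d₂ + (t ^ 4 / 6) • B d₁ d₂ := by
  have expansion := isAlt_apply_smul_add_smul_add_smul hB t (t ^ 2 / 2) (t ^ 3 / 3) 1 t (t ^ 2)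
    d₀ d₁ d₂
  rw [one_smul] at expansion
  rw [expansion]
  module

theorem three_sample_correction_eq (hB : B.IsAlt) (u v w : M) {Δ₁ Δ₂ Δ₃ : M}
    (hΔ₁ : Δ₁ = (1 : K) • u + (1 / 2 : K) • v + (1 / 3 : K) • w)
    (hΔ₂ : Δ₂ = (1 : K) • u + (3 / 2 : K) • v + (7 / 3 : K) • w)
    (hΔ₃ : Δ₃ = (1 : K) • u + (5 / 2 : K) • v + (19 / 3 : K) • w) :
    (33 / 80 : K) • B Δ₁ Δ₃ + (57 / 80 : K) • B Δ₂ (Δ₃ - Δ₁) =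
      (9 / 4 : K) • B u v + (27 / 4 : K) • B u w + (81 / 20 : K) • B v w := by
  have hdiff : Δ₃ - Δ₁ = (0 : K) • u + (2 : K) • v + (6 : K) • w := by
    rw [hΔ₁, hΔ₃]
    module
  rw [hdiff, hΔ₁, hΔ₂, hΔ₃]
  simp only [isAlt_apply_smul_add_smul_add_smul hB]
  module

end Algebra

section Integrals

variable {E : Type*} [NormedAddCommGroup E] [NormedSpace ℝ E] [CompleteSpace E]

theorem integral_sum_pow_smul {n : ℕ} (c : Fin n → E) (a b : ℝ) :
    ∫ s in a..b, ∑ i : Fin n, s ^ (i : ℕ) • c i =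
      ∑ i : Fin n, ((b ^ (i + 1 : ℕ) - a ^ (i + 1 : ℕ)) / (i + 1)) • c i := by
  rw [intervalIntegral.integral_finsetSum fun (i : Fin n) _ =>
    (show Continuous fun s : ℝ => s ^ (i : ℕ) • c i by fun_prop).intervalIntegrable a b]
  simp only [intervalIntegral.integral_smul_const, integral_pow]

theorem integral_quartic (c₀ c₁ c₂ c₃ c₄ : E) (a b : ℝ) :
    ∫ s in a..b, (c₀ + s • c₁ + s ^ 2 • c₂ + s ^ 3 • c₃ + s ^ 4 • c₄) =
      (b - a) • c₀ + ((b ^ 2 - a ^ 2) / 2) • c₁ + ((b ^ 3 - a ^ 3) / 3) • c₂ +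
        ((b ^ 4 - a ^ 4) / 4) • c₃ + ((b ^ 5 - a ^ 5) / 5) • c₄ := by
  convert integral_sum_pow_smul ![c₀, c₁, c₂, c₃, c₄] a b using 1
  · simp [Fin.sum_univ_five]
  · simp only [Fin.sum_univ_five, cons_val, Fin.coe_ofNat_eq_mod]
    norm_num

theorem integral_quadratic (d₀ d₁ d₂ : E) (a b : ℝ) :
    ∫ s in a..b, (d₀ + s • d₁ + s ^ 2 • d₂) =
      (b - a) • d₀ + ((b ^ 2 - a ^ 2) / 2) • d₁ + ((b ^ 3 - a ^ 3) / 3) • d₂ := by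
  simpa using integral_quartic d₀ d₁ d₂ 0 0 a b

theorem sub_eq_of_hasDerivAt_quadratic_add_half_isAlt {B : E →ₗ[ℝ] E →ₗ[ℝ] E} (hB : B.IsAlt)
    {d₀ d₁ d₂ : E} {ω σ : ℝ → E} {x : ℝ} (hω : ∀ t, ω t = d₀ + t • d₁ + t ^ 2 • d₂)
    (hσ : ∀ t ∈ Set.uIcc 0 x,
      HasDerivAt σ (ω t + (1 / 2 : ℝ) • B (∫ s in (0 : ℝ)..t, ω s) (ω t)) t) :
    σ x - σ 0 = (∫ s in (0 : ℝ)..x, ω s) + ((x ^ 3 / 12) • B d₀ d₁ +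
      (x ^ 4 / 12) • B d₀ d₂ + (x ^ 5 / 60) • B d₁ d₂) := by
  have integral_ω (t : ℝ) :
      ∫ s in (0 : ℝ)..t, ω s = t • d₀ + (t ^ 2 / 2) • d₁ + (t ^ 3 / 3) • d₂ := by
    simp [hω, integral_quadratic]
  have deriv_eq_quartic (t : ℝ) :
      ω t + (1 / 2 : ℝ) • B (∫ s in (0 : ℝ)..t, ω s) (ω t) =
        d₀ + t • d₁ + t ^ 2 • (d₂ + (1 / 4 : ℝ) • B d₀ d₁) +
          t ^ 3 • ((1 / 3 : ℝ) • B d₀ d₂) + t ^ 4 • ((1 / 12 : ℝ) • B d₁ d₂) := by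
    rw [integral_ω, hω, isAlt_apply_primitive_quadratic_quadratic hB]
    module
  simp only [deriv_eq_quartic] at hσ
  rw [← intervalIntegral.integral_eq_sub_of_hasDerivAt hσ
      (Continuous.intervalIntegrable (by fun_prop) 0 x), integral_quartic, integral_ω]
  module

end Integrals

theorem mainstream_three_sample_algorithm_exact_general {E : Type*} [NormedAddCommGroup E]
    [NormedSpace ℝ E] [CompleteSpace E] {B : E →ₗ[ℝ] E →ₗ[ℝ] E} (hB : B.IsAlt) {T : ℝ}
    {d₀ d₁ d₂ : E} {ω : ℝ → E} (hω : ∀ t, ω t = d₀ + t • d₁ + t ^ 2 • d₂)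
    {θ : ℝ → E} (hθ : ∀ t, θ t = ∫ s in (0 : ℝ)..t, ω s) {Δθ₁ Δθ₂ Δθ₃ : E}
    (h₁ : Δθ₁ = ∫ s in (0 : ℝ)..T, ω s) (h₂ : Δθ₂ = ∫ s in T..(2 * T), ω s)
    (h₃ : Δθ₃ = ∫ s in (2 * T)..(3 * T), ω s) {σ : ℝ → E}
    (hσ : ∀ t ∈ Set.uIcc 0 (3 * T), HasDerivAt σ (ω t + (1 / 2 : ℝ) • B (θ t) (ω t)) t) :
    σ (3 * T) - σ 0 = Δθ₁ + Δθ₂ + Δθ₃ + (33 / 80 : ℝ) • B Δθ₁ Δθ₃ +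
      (57 / 80 : ℝ) • B Δθ₂ (Δθ₃ - Δθ₁) := by
  have integral_ω (a b : ℝ) : ∫ s in a..b, ω s =
      (b - a) • d₀ + ((b ^ 2 - a ^ 2) / 2) • d₁ + ((b ^ 3 - a ^ 3) / 3) • d₂ := by
    simp only [hω, integral_quadratic]
  have sum_increments : Δθ₁ + Δθ₂ + Δθ₃ = ∫ s in (0 : ℝ)..(3 * T), ω s := by
    rw [h₁, h₂, h₃]
    simp only [integral_ω]
    module
  have correction := three_sample_correction_eq hB (T • d₀) (T ^ 2 • d₁) (T ^ 3 • d₂)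
    (show Δθ₁ = _ by rw [h₁, integral_ω]; module) (show Δθ₂ = _ by rw [h₂, integral_ω]; module)
    (show Δθ₃ = _ by rw [h₃, integral_ω]; module)
  simp only [hθ] at hσ
  rw [add_assoc _ (_ • B Δθ₁ Δθ₃), correction, sum_increments,
    sub_eq_of_hasDerivAt_quadratic_add_half_isAlt hB hω hσ]
  simp only [map_smul, LinearMap.smul_apply]
  module

theorem isAlt_crossProduct (R : Type*) [CommRing R] :
    (crossProduct : (Fin 3 → R) →ₗ[R] (Fin 3 → R) →ₗ[R] (Fin 3 → R)).IsAlt :=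
  cross_self

/-- The mainstream non-coning-optimized 3-sample attitude algorithm is exact for
quadratic angular velocity: if `ω(t) = d₀ + t d₁ + t² d₂`,
`σ̇ = ω + ½ (∫₀ᵗ ω) × ω`, `σ(0) = 0`, and `Δθₖ = ∫_{(k−1)T}^{kT} ω` for
`k = 1, 2, 3`, then `σ(3T) = Δθ₁ + Δθ₂ + Δθ₃ + (33/80) Δθ₁ × Δθ₃
+ (57/80) Δθ₂ × (Δθ₃ − Δθ₁)`. -/
theorem mainstream_three_sample_algorithm_exact
    (T : ℝ) (hT : 0 < T) (d0 d1 d2 : Fin 3 → ℝ)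
    (ω : ℝ → Fin 3 → ℝ) (hω : ∀ t : ℝ, ω t = d0 + t • d1 + t ^ 2 • d2)
    (θ : ℝ → Fin 3 → ℝ) (hθ : ∀ t : ℝ, θ t = ∫ s in (0 : ℝ)..t, ω s)
    (Δθ1 Δθ2 Δθ3 : Fin 3 → ℝ)
    (h1 : Δθ1 = ∫ s in (0 : ℝ)..T, ω s)
    (h2 : Δθ2 = ∫ s in T..(2 * T), ω s)
    (h3 : Δθ3 = ∫ s in (2 * T)..(3 * T), ω s)
    (σ : ℝ → Fin 3 → ℝ) (hσd : Differentiable ℝ σ) (hσ0 : σ 0 = 0)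
    (heq : ∀ t : ℝ, deriv σ t = ω t + (1 / 2 : ℝ) • crossProduct (θ t) (ω t)) :
    σ (3 * T) = Δθ1 + Δθ2 + Δθ3
      + (33 / 80 : ℝ) • crossProduct Δθ1 Δθ3
      + (57 / 80 : ℝ) • crossProduct Δθ2 (Δθ3 - Δθ1) := by
  rw [← mainstream_three_sample_algorithm_exact_general (isAlt_crossProduct ℝ) hω hθ h1 h2 h3
    fun t _ => heq t ▸ (hσd t).hasDerivAt, hσ0, sub_zero]
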